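/- Let 0 < d < n and let Ω ⊂ ℝⁿ be open with d-Ahlfors regular boundary. Let ξ ∈ ∂Ω, 0 < R < 2·diam ∂Ω, 1 ≤ β ≤ ∞, 1 ≤ p ≤ ∞, 0 < c < 1 and s ∈ ℝ. Suppose u ∈ L^β_loc(Ω) satisfies ∫_{B(ξ,R)∩Ω} W_{c,β}(u)^p δ^{d−n−ps} < ∞ (with the supremum sup W_{c,β}(u)·δ^{−s} < ∞ when p = ∞). Then: (i) if s > −(n−d), then u is integrable on K ∩ Ω for every compact K ⊂ B(ξ,R); (ii) if p = ∞ and s > 0, or if p < ∞ and s ≥ d/p, then Tr u(x) = 0 for every x ∈ B(ξ,R) ∩ ∂Ω; (iii) if p < ∞ and s ≥ 0, then Tr u(x) = 0 for σ-a.e. x ∈ B(ξ,R) ∩ ∂Ω. -/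

import Mathlib

open MeasureTheory Metric Set Filter
open scoped ENNReal NNReal Topology RealInnerProductSpace

noncomputable section

namespace Paper

/-- Euclidean space `ℝⁿ`. -/
abbrev Euc (n : ℕ) : Type := EuclideanSpace ℝ (Fin n)

variable {n : ℕ}

/-- `δ(x)`: the distance from `x` to the boundary of `Ω`. -/
def bd (Ω : Set (Euc n)) (x : Euc n) : ℝ := Metric.infDist x (frontier Ω)

/-- `σ`: the `d`-dimensional Hausdorff measure on `ℝⁿ`. -/
def hm (n : ℕ) (d : ℝ) : Measure (Euc n) := μH[d]

/-- `Γ ⊆ ℝⁿ` is `d`-Ahlfors regular with constant `A`: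
`(1/A) rᵈ ≤ σ(B(ξ,r) ∩ Γ) ≤ A rᵈ` for all `ξ ∈ Γ` and `0 < r ≤ diam Γ`. -/
def AhlforsRegular (d A : ℝ) (Γ : Set (Euc n)) : Prop :=
  Γ.Nonempty ∧ 0 < A ∧
    ∀ ξ ∈ Γ, ∀ r : ℝ, 0 < r → ENNReal.ofReal r ≤ EMetric.diam Γ →
      ENNReal.ofReal (r ^ d / A) ≤ hm n d (Metric.ball ξ r ∩ Γ) ∧
        hm n d (Metric.ball ξ r ∩ Γ) ≤ ENNReal.ofReal (A * r ^ d)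

/-- A `λ`-carrot path from `x ∈ ∂Ω` to `y ∈ Ω`: a rectifiable curve, parameterized by
arc length (hence `1`-Lipschitz), from `x` to `y`, staying in `Ω ∪ {x}`, with
`δ(ζ(t)) ≥ λ t`. -/
def IsCarrotPath (Ω : Set (Euc n)) (lam : ℝ) (x y : Euc n) : Prop :=
  ∃ (T : ℝ) (ζ : ℝ → Euc n), 0 ≤ T ∧ ζ 0 = x ∧ ζ T = y ∧
    LipschitzOnWith 1 ζ (Set.Icc 0 T) ∧
    (∀ t ∈ Set.Icc (0 : ℝ) T, ζ t ∈ Ω ∪ {x}) ∧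
    (∀ t ∈ Set.Icc (0 : ℝ) T, lam * t ≤ bd Ω (ζ t))

/-- `y ∈ Ω` is a `(θ,λ,N)`-weak local John point. -/
def IsWLJPoint (Ω : Set (Euc n)) (d θ lam N : ℝ) (y : Euc n) : Prop :=
  ∃ F : Set (Euc n), MeasurableSet F ∧
    F ⊆ Metric.ball y (N * bd Ω y) ∩ frontier Ω ∧
    ENNReal.ofReal θ * hm n d (Metric.ball y (N * bd Ω y) ∩ frontier Ω) ≤ hm n d F ∧
    ∀ x ∈ F, IsCarrotPath Ω lam x y

/-- The weak local John condition with specified parameters. -/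
def WeakLocalJohnWith (Ω : Set (Euc n)) (d θ lam N : ℝ) : Prop :=
  0 < θ ∧ θ ≤ 1 ∧ 0 < lam ∧ lam ≤ 1 ∧ 2 ≤ N ∧ ∀ y ∈ Ω, IsWLJPoint Ω d θ lam N y

/-- `Ω` is a weak local John domain. -/
def WeakLocalJohn (Ω : Set (Euc n)) (d : ℝ) : Prop :=
  ∃ θ lam N : ℝ, WeakLocalJohnWith Ω d θ lam N

/-- The interior corkscrew condition. -/
def InteriorCorkscrew (Ω : Set (Euc n)) : Prop :=
  ∃ ε : ℝ, 0 < ε ∧ ε < 1 ∧ ∀ x ∈ frontier Ω, ∀ r : ℝ, 0 < r →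
    ENNReal.ofReal r < EMetric.diam Ω →
    ∃ z : Euc n, z ∈ Metric.ball x r ∧ Metric.ball z (ε * r) ⊆ Ω

/-- The Harnack chain condition. -/
def HarnackChainCond (Ω : Set (Euc n)) : Prop :=
  ∃ (M m : ℝ) (Nf : ℝ → ℕ), 1 ≤ M ∧ 0 < m ∧ m < 1 ∧
    ∀ x ∈ Ω, ∀ y ∈ Ω,
      ∃ (N : ℕ) (c : Fin (N + 1) → Euc n) (r : Fin (N + 1) → ℝ),
        N ≤ Nf (dist x y / min (bd Ω x) (bd Ω y)) ∧
        x ∈ Metric.ball (c 0) (r 0) ∧ y ∈ Metric.ball (c (Fin.last N)) (r (Fin.last N)) ∧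
        (∀ i : Fin N,
          (Metric.ball (c i.castSucc) (r i.castSucc) ∩ Metric.ball (c i.succ) (r i.succ)).Nonempty) ∧
        ∀ i : Fin (N + 1), 0 < r i ∧ Metric.ball (c i) (r i) ⊆ Ω ∧
          m * (2 * r i) ≤ bd Ω (c i) - r i ∧ bd Ω (c i) - r i ≤ M * (2 * r i)

/-- The weighted ellipticity conditions
`λ δ(x)^{d+1-n} |ξ|² ≤ ξ·A(x)ξ` and `|η·A(x)ξ| ≤ Λ δ(x)^{d+1-n} |ξ||η|` on `Ω`. -/
def WeaklyElliptic (Ω : Set (Euc n)) (d lam Lam : ℝ)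
    (A : Euc n → Euc n →L[ℝ] Euc n) : Prop :=
  0 < lam ∧ lam ≤ Lam ∧ (∀ v : Euc n, Measurable fun x => A x v) ∧
    ∀ x ∈ Ω, ∀ ξ η : Euc n,
      lam * bd Ω x ^ (d + 1 - (n : ℝ)) * ‖ξ‖ ^ 2 ≤ ⟪ξ, A x ξ⟫ ∧
      |⟪η, A x ξ⟫| ≤ Lam * bd Ω x ^ (d + 1 - (n : ℝ)) * ‖ξ‖ * ‖η‖

/-- A test function on the open set `Ψ`: smooth, compactly supported, support inside `Ψ`. -/
def IsTestOn (Ψ : Set (Euc n)) (φ : Euc n → ℝ) : Prop :=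
  ContDiff ℝ (⊤ : ℕ∞) φ ∧ HasCompactSupport φ ∧ tsupport φ ⊆ Ψ

/-- `g` is the weak gradient of `u` on `Ψ`:
`∫_Ψ u ∂ᵥφ = −∫_Ψ ⟪g,v⟫ φ` for all test functions `φ` and directions `v`. -/
def HasWeakGradOn (u : Euc n → ℝ) (g : Euc n → Euc n) (Ψ : Set (Euc n)) : Prop :=
  LocallyIntegrableOn u Ψ volume ∧ LocallyIntegrableOn g Ψ volume ∧
    ∀ φ : Euc n → ℝ, IsTestOn Ψ φ → ∀ v : Euc n,
      (∫ x in Ψ, u x * fderiv ℝ φ x v) = -∫ x in Ψ, ⟪g x, v⟫ * φ x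

/-- Weak formulation of `− div A ∇u = − div H` in `Ψ`, where `g` is the weak gradient
of `u`. -/
def WeakSolOn (Ψ : Set (Euc n)) (A : Euc n → Euc n →L[ℝ] Euc n)
    (u : Euc n → ℝ) (g H : Euc n → Euc n) : Prop :=
  HasWeakGradOn u g Ψ ∧ LocallyIntegrableOn H Ψ volume ∧
    ∀ φ : Euc n → ℝ, IsTestOn Ψ φ →
      (∫ x in Ψ, ⟪gradient φ x, A x (g x)⟫) = ∫ x in Ψ, ⟪gradient φ x, H x⟫

/-- `Tr u(ξ) = 0` in the averaged sense: `r^{-n} ∫_{B(ξ,r)∩Ω} |u| → 0` as `r → 0⁺`. -/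
def TrZeroAt (Ω : Set (Euc n)) (u : Euc n → ℝ) (ξ : Euc n) : Prop :=
  Tendsto (fun r : ℝ => (1 / r ^ n) * ∫ x in Metric.ball ξ r ∩ Ω, |u x|)
    (𝓝[>] 0) (𝓝 0)

/-- The Whitney average `W_{c,β} f (y) = (⨍_{B(y, c δ(y))} |f|^β)^{1/β}`
(essential supremum if `β = ∞`), as an extended nonnegative real. -/
def wAvg (Ω : Set (Euc n)) (c : ℝ) (β : ℝ≥0∞) {F : Type*} [NormedAddCommGroup F]
    (f : Euc n → F) (y : Euc n) : ℝ≥0∞ :=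
  eLpNorm f β
    ((volume (Metric.ball y (c * bd Ω y)))⁻¹ • volume.restrict (Metric.ball y (c * bd Ω y)))

/-- The weighted averaged norm `‖f‖_{L^p_{av,c,β,s}(Ψ;Ω)}`:
`(∫_Ψ (W_{c,β}f)^p δ^{d-n+p-ps})^{1/p}`, `sup_Ψ (W_{c,β}f) δ^{1-s}` if `p = ∞`. -/
def avNormOn (Ω Ψ : Set (Euc n)) (d c : ℝ) (β p : ℝ≥0∞) (s : ℝ)
    {F : Type*} [NormedAddCommGroup F] (f : Euc n → F) : ℝ≥0∞ :=
  if p = ⊤ then ⨆ y ∈ Ψ, wAvg Ω c β f y * ENNReal.ofReal (bd Ω y) ^ (1 - s)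
  else (∫⁻ y in Ψ, wAvg Ω c β f y ^ p.toReal *
      ENNReal.ofReal (bd Ω y) ^ (d - n + p.toReal - p.toReal * s)) ^ (1 / p.toReal)

/-- The weighted averaged norm `‖f‖_{L^p_{av,c,β,s}(Ω)}`. -/
def avNorm (Ω : Set (Euc n)) (d c : ℝ) (β p : ℝ≥0∞) (s : ℝ)
    {F : Type*} [NormedAddCommGroup F] (f : Euc n → F) : ℝ≥0∞ :=
  avNormOn Ω Ω d c β p s f

/-- `f ∈ L^β_loc(Ω)`. -/
def MemLLoc (Ω : Set (Euc n)) (β : ℝ≥0∞) {F : Type*} [NormedAddCommGroup F]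
    (f : Euc n → F) : Prop :=
  AEStronglyMeasurable f (volume.restrict Ω) ∧
    ∀ K : Set (Euc n), K ⊆ Ω → IsCompact K → eLpNorm f β (volume.restrict K) < ⊤

/-- The nontangential cone `γ_a(ξ) = {x ∈ Ω : |x − ξ| < (1+a) δ(x)}`. -/
def ntCone (Ω : Set (Euc n)) (a : ℝ) (ξ : Euc n) : Set (Euc n) :=
  {x | x ∈ Ω ∧ dist x ξ < (1 + a) * bd Ω x}

/-- The nontangential maximal function `N_a f (ξ) = esssup_{γ_a(ξ)} |f|`. -/
def ntMax (Ω : Set (Euc n)) (a : ℝ) {F : Type*} [NormedAddCommGroup F]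
    (f : Euc n → F) (ξ : Euc n) : ℝ≥0∞ :=
  essSup (fun x => (‖f x‖₊ : ℝ≥0∞)) (volume.restrict (ntCone Ω a ξ))

/-- The `L^q` norm of an `ℝ≥0∞`-valued function. -/
def lqNormE (q : ℝ≥0∞) {α : Type*} [MeasurableSpace α] (μ : Measure α)
    (f : α → ℝ≥0∞) : ℝ≥0∞ :=
  if q = ⊤ then essSup f μ else (∫⁻ x, f x ^ q.toReal ∂μ) ^ (1 / q.toReal)

/-- `Tr_{a,c} u (x) = U`: `x` is in the closure of its nontangential cone, and the
Whitney averages of `|u − U|` tend to `0` nontangentially. -/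
def HasNTTrace (Ω : Set (Euc n)) (a c : ℝ) (u : Euc n → ℝ) (x : Euc n) (U : ℝ) : Prop :=
  x ∈ closure (ntCone Ω a x) ∧
    Tendsto (fun y => wAvg Ω c 1 (fun z => u z - U) y) (𝓝[ntCone Ω a x] x) (𝓝 0)

/-!
For `z ∈ Ω` every Whitney ball `B(y, cδ(y))` centred at a point `y` of `B(z, tδ(z))`, `t ≤ c / 2`,
contains `z` and has measure comparable to `B(z, δ(z))`. Hence, by Tonelli and Jensen, `∫_E |u|` is
bounded by a multiple of `∫_U W_{c,β}(u)` as soon as `U` contains these small balls, and everything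
reduces to the function `W = W_{c,β}(u)`.

*Integrability.* Where `δ ≤ D`, `W ≤ δˢ + D^{s+n-d} W^p δ^{d-n-ps}` (with `W ≤ C δˢ` if `p = ∞`),
and `∫_B δˢ < ∞` for bounded `B` when `s > d - n`: near `∂Ω`, for `s ≤ 0`, lower regularity bounds
`δ(y)ˢ` by a multiple of the truncated Riesz potential `∫ |y - x|^{s-d} dσ(x)`, whose kernel is
locally integrable in `y`.

*Trace.* For `p = ∞`, `r⁻ⁿ ∫_{B(x,r)} W ≤ C rˢ`. For `p < ∞` let `m` be the finite measure
`W^p δ^{d-n-ps} dy`; Jensen's inequality gives `(r⁻ⁿ ∫_{B(x,r)} W)^p ≤ C r^{ps-d} m(B(x,r))`. If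
`ps ≥ d` the right-hand side vanishes in the limit because `m {x} = 0`. If only `s ≥ 0`, it suffices
that `m(B(x,r)) = o(rᵈ)` for `σ`-a.e. `x ∈ ∂Ω`, and this follows from a Vitali covering because
`m(∂Ω) = 0`.
-/

section Averages

variable {X : Type*} [MeasurableSpace X] {μ : Measure X}

lemma rpow_lintegral_le {q : ℝ} (hq : 1 ≤ q) (f : X → ℝ≥0∞) :
    (∫⁻ x, f x ∂μ) ^ q ≤ μ univ ^ (q - 1) * ∫⁻ x, f x ^ q ∂μ := by
  have hq0 : 0 < q := one_pos.trans_le hq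
  obtain ⟨g, hg, hgf, hfg⟩ := exists_measurable_le_lintegral_eq μ f
  have hölder : ∫⁻ x, g x ∂μ ≤ (∫⁻ x, g x ^ q ∂μ) ^ (1 / q) * μ univ ^ (1 - 1 / q) := by
    simpa [eLpNorm'] using
      eLpNorm'_le_eLpNorm'_mul_rpow_measure_univ one_pos hq hg.aestronglyMeasurable (μ := μ)
  calc (∫⁻ x, f x ∂μ) ^ q
      ≤ ((∫⁻ x, g x ^ q ∂μ) ^ (1 / q) * μ univ ^ (1 - 1 / q)) ^ q := by rw [hfg]; gcongr
    _ = μ univ ^ (q - 1) * ∫⁻ x, g x ^ q ∂μ := by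
        rw [ENNReal.mul_rpow_of_nonneg _ _ hq0.le, ← ENNReal.rpow_mul, ← ENNReal.rpow_mul,
          one_div_mul_cancel hq0.ne', ENNReal.rpow_one, sub_mul, one_div_mul_cancel hq0.ne',
          one_mul, mul_comm]
    _ ≤ μ univ ^ (q - 1) * ∫⁻ x, f x ^ q ∂μ := by gcongr with x; exact hgf x

lemma laverage_enorm_le_eLpNorm_cond {F : Type*} [NormedAddCommGroup F] {β : ℝ≥0∞} (hβ : 1 ≤ β)
    {s : Set X} (hs : μ s ≠ ⊤) {f : X → F} (hf : AEStronglyMeasurable f (μ.restrict s)) :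
    ⨍⁻ x in s, ‖f x‖ₑ ∂μ ≤ eLpNorm f β ((μ s)⁻¹ • μ.restrict s) := by
  rcases eq_or_ne (μ s) 0 with h0 | h0
  · simp [Measure.restrict_eq_zero.2 h0]
  have : IsProbabilityMeasure ((μ s)⁻¹ • μ.restrict s) :=
    ProbabilityTheory.cond_isProbabilityMeasure_of_finite h0 hs
  rw [setLAverage_eq', ← eLpNorm_one_eq_lintegral_enorm]
  exact eLpNorm_le_eLpNorm_of_exponent_le hβ (hf.smul_measure _)

lemma setLIntegral_mul_le_setLIntegral_laverage_ball [PseudoMetricSpace X]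
    [SecondCountableTopology X] [OpensMeasurableSpace X] [SFinite μ] {f : X → ℝ≥0∞}
    (hf : AEMeasurable f μ) {r : X → ℝ} (hr : Measurable r) {E U : Set X} (hE : MeasurableSet E)
    {C : ℝ≥0∞} (hC : ∀ z ∈ E, C ≤ ∫⁻ y in U ∩ {y | z ∈ ball y (r y)}, (μ (ball y (r y)))⁻¹ ∂μ) :
    (∫⁻ z in E, f z ∂μ) * C ≤ ∫⁻ y in U, ⨍⁻ z in ball y (r y), f z ∂μ ∂μ := by
  have hS : MeasurableSet {q : X × X | q.2 ∈ ball q.1 (r q.1)} :=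
    measurableSet_lt (measurable_snd.dist measurable_fst) (hr.comp measurable_fst)
  have hinv : Measurable fun y => (μ (ball y (r y)))⁻¹ := (measurable_measure_prodMk_left hS).inv
  let k : X → X → ℝ≥0∞ := fun y z =>
    {q : X × X | q.2 ∈ ball q.1 (r q.1)}.indicator
      (fun q => (μ (ball q.1 (r q.1)))⁻¹ * f q.2) (y, z)
  have hk : AEMeasurable (Function.uncurry k) ((μ.restrict U).prod (μ.restrict E)) :=
    ((hinv.comp measurable_fst).aemeasurable.mul hf.restrict.comp_snd).indicator hS
  calc (∫⁻ z in E, f z ∂μ) * C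
      = ∫⁻ z in E, f z * C ∂μ := (lintegral_mul_const'' _ hf.restrict).symm
    _ ≤ ∫⁻ z in E, ∫⁻ y in U, k y z ∂μ ∂μ := by
        refine setLIntegral_mono' hE fun z hz => ?_
        have hz' : MeasurableSet {y | z ∈ ball y (r y)} := measurable_prodMk_right hS
        calc f z * C ≤ f z * ∫⁻ y in U ∩ {y | z ∈ ball y (r y)}, (μ (ball y (r y)))⁻¹ ∂μ := by
              gcongr
              exact hC z hz
          _ = ∫⁻ y in U, k y z ∂μ := by
              rw [inter_comm, ← Measure.restrict_restrict hz', ← lintegral_indicator hz',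
                ← lintegral_const_mul _ (hinv.indicator hz')]
              refine lintegral_congr fun y => ?_
              simp [k, indicator, mul_comm]
    _ = ∫⁻ y in U, ∫⁻ z in E, k y z ∂μ ∂μ := (lintegral_lintegral_swap hk).symm
    _ ≤ ∫⁻ y in U, ⨍⁻ z in ball y (r y), f z ∂μ ∂μ := by
        refine lintegral_mono fun y => ?_
        calc ∫⁻ z in E, k y z ∂μ ≤ ∫⁻ z, k y z ∂μ := setLIntegral_le_lintegral _ _
          _ = ∫⁻ z in ball y (r y), (μ (ball y (r y)))⁻¹ * f z ∂μ := by
              rw [← lintegral_indicator measurableSet_ball]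
              rfl
          _ = ⨍⁻ z in ball y (r y), f z ∂μ := by
              rw [lintegral_const_mul'' _ hf.restrict, setLAverage_eq, mul_comm, div_eq_mul_inv]

end Averages

section Potential

variable {E : Type*} [NormedAddCommGroup E]

/-- The Riesz kernel `‖x‖ᵃ` truncated to the ball of radius `r`, with values in `ℝ≥0∞` (the value
at `0` is finite even for `a < 0`). -/
def truncatedRiesz (a r : ℝ) (x : E) : ℝ≥0∞ :=
  (ball 0 r).indicator (fun x => ENNReal.ofReal (‖x‖ ^ a)) x

variable [MeasurableSpace E] [BorelSpace E] {μ : Measure E}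

lemma measurable_truncatedRiesz (a r : ℝ) : Measurable (truncatedRiesz a r : E → ℝ≥0∞) :=
  (measurable_norm.pow_const a).ennreal_ofReal.indicator measurableSet_ball

lemma lintegral_truncatedRiesz_lt_top [NormedSpace ℝ E] [FiniteDimensional ℝ E]
    [μ.IsAddHaarMeasure] {a : ℝ} (ha : -(Module.finrank ℝ E : ℝ) < a) (r : ℝ) :
    ∫⁻ x, truncatedRiesz a r x ∂μ < ⊤ := by
  simp only [truncatedRiesz, lintegral_indicator measurableSet_ball]
  rcases subsingleton_or_nontrivial E with hE | hE
  · simp only [norm_of_subsingleton, setLIntegral_const]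
    exact ENNReal.mul_lt_top ENNReal.ofReal_lt_top measure_ball_lt_top
  refine IntegrableOn.setLIntegral_lt_top ?_
  refine integrableOn_ball_of_norm_le_rpow (C := 1) (α := -a) Module.finrank_pos (by linarith)
    (ae_of_all _ fun x => ?_) (measurable_norm.pow_const a).aestronglyMeasurable
  rw [Real.norm_of_nonneg (by positivity), neg_neg, one_mul]

lemma lintegral_lintegral_sub [SecondCountableTopology E] [SFinite μ] [μ.IsAddRightInvariant]
    {ν : Measure E} [SFinite ν] {g : E → ℝ≥0∞} (hg : Measurable g) :
    ∫⁻ y, ∫⁻ x, g (y - x) ∂ν ∂μ = ν univ * ∫⁻ y, g y ∂μ := by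
  rw [lintegral_lintegral_swap (f := fun y x => g (y - x))
    (hg.comp (measurable_fst.sub measurable_snd)).aemeasurable]
  simp [lintegral_sub_right_eq_self, mul_comm]

lemma ofReal_infDist_rpow_le_setLIntegral_truncatedRiesz [ProperSpace E] {σ : Measure E}
    {Γ : Set E} (hΓ : IsClosed Γ) (hne : Γ.Nonempty) {A d s ρ r : ℝ} (hA : 0 < A) (hsd : s ≤ d)
    (hσ : ∀ ζ ∈ Γ, ∀ t, 0 < t → t ≤ ρ → ENNReal.ofReal (t ^ d / A) ≤ σ (ball ζ t ∩ Γ))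
    {y : E} (hy : y ∉ Γ) (hyρ : infDist y Γ ≤ 2 * ρ) (hyr : 2 * infDist y Γ ≤ r) :
    ENNReal.ofReal (infDist y Γ ^ s) ≤ ENNReal.ofReal (4 ^ d * 2 ^ (-s) * A) *
      ∫⁻ x in ball y r ∩ Γ, truncatedRiesz (s - d) r (y - x) ∂σ := by
  have hδ : 0 < infDist y Γ := (hΓ.notMem_iff_infDist_pos hne).1 hy
  obtain ⟨ζ, hζ, hyζ⟩ := hΓ.exists_infDist_eq_dist hne y
  set δ := infDist y Γ
  have hsub : ball ζ (δ / 2) ∩ Γ ⊆ ball y r ∩ Γ :=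
    inter_subset_inter_left _ (ball_subset_ball' (by rw [dist_comm, ← hyζ]; linarith))
  calc ENNReal.ofReal (δ ^ s)
      = ENNReal.ofReal (4 ^ d * 2 ^ (-s) * A) *
          (ENNReal.ofReal ((2 * δ) ^ (s - d)) * ENNReal.ofReal ((δ / 2) ^ d / A)) := by
        rw [← ENNReal.ofReal_mul (by positivity), ← ENNReal.ofReal_mul (by positivity),
          Real.mul_rpow two_pos.le hδ.le, Real.div_rpow hδ.le two_pos.le, Real.rpow_sub hδ,
          Real.rpow_sub two_pos, Real.rpow_neg two_pos.le, show (4 : ℝ) = 2 * 2 by norm_num,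
          Real.mul_rpow two_pos.le two_pos.le]
        congr 1
        field_simp
    _ ≤ ENNReal.ofReal (4 ^ d * 2 ^ (-s) * A) *
          (ENNReal.ofReal ((2 * δ) ^ (s - d)) * σ (ball ζ (δ / 2) ∩ Γ)) := by
        gcongr
        exact hσ ζ hζ _ (half_pos hδ) (by linarith)
    _ = ENNReal.ofReal (4 ^ d * 2 ^ (-s) * A) *
          ∫⁻ _ in ball ζ (δ / 2) ∩ Γ, ENNReal.ofReal ((2 * δ) ^ (s - d)) ∂σ := by
        rw [setLIntegral_const]
    _ ≤ ENNReal.ofReal (4 ^ d * 2 ^ (-s) * A) *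
          ∫⁻ x in ball ζ (δ / 2) ∩ Γ, truncatedRiesz (s - d) r (y - x) ∂σ := by
        refine mul_le_mul_right (setLIntegral_mono' (measurableSet_ball.inter hΓ.measurableSet)
          fun x hx => ?_) _
        have hxr : y - x ∈ ball (0 : E) r := by
          rw [mem_ball_zero_iff, ← dist_eq_norm, dist_comm]
          exact (hsub hx).1
        have hδx : δ ≤ ‖y - x‖ := by simpa [dist_eq_norm] using infDist_le_dist_of_mem hx.2 (x := y)
        have hxδ : ‖y - x‖ ≤ 2 * δ := by
          have := dist_triangle_right y x ζ
          have : dist x ζ < δ / 2 := hx.1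
          rw [← dist_eq_norm]
          linarith
        rw [truncatedRiesz, indicator_of_mem hxr]
        exact ENNReal.ofReal_le_ofReal
          (Real.rpow_le_rpow_of_nonpos (hδ.trans_le hδx) hxδ (by linarith))
    _ ≤ _ := by gcongr

lemma setLIntegral_infDist_rpow_lt_top_of_nonpos [NormedSpace ℝ E] [FiniteDimensional ℝ E]
    [μ.IsAddHaarMeasure] {σ : Measure E} {Γ : Set E} (hΓ : IsClosed Γ) (hne : Γ.Nonempty)
    {A d s ρ : ℝ} (hA : 0 < A) (hρ : 0 < ρ) (hd : 0 ≤ d) (hs : d - Module.finrank ℝ E < s)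
    (hs0 : s ≤ 0) (hσ : ∀ ζ ∈ Γ, ∀ t, 0 < t → t ≤ ρ → ENNReal.ofReal (t ^ d / A) ≤ σ (ball ζ t ∩ Γ))
    (hfin : ∀ x R, σ (closedBall x R ∩ Γ) < ⊤) (z : E) (R : ℝ) :
    ∫⁻ y in closedBall z R \ Γ, ENNReal.ofReal (infDist y Γ ^ s) ∂μ < ⊤ := by
  have : ProperSpace E := FiniteDimensional.proper ℝ E
  set C := ENNReal.ofReal (4 ^ d * 2 ^ (-s) * A)
  set ν := σ.restrict (closedBall z (R + 4 * ρ) ∩ Γ)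
  have : IsFiniteMeasure ν := isFiniteMeasure_restrict.2 (hfin _ _).ne
  have hpt : ∀ y ∈ closedBall z R \ Γ, ENNReal.ofReal (infDist y Γ ^ s) ≤
      ENNReal.ofReal ((2 * ρ) ^ s) + C * ∫⁻ x, truncatedRiesz (s - d) (4 * ρ) (y - x) ∂ν := by
    rintro y ⟨hyz, hyΓ⟩
    rcases le_total (infDist y Γ) (2 * ρ) with hnear | hfar
    · have hball : ball y (4 * ρ) ⊆ closedBall z (R + 4 * ρ) :=
        ball_subset_closedBall.trans (closedBall_subset_closedBall' (by
          linarith [mem_closedBall.1 hyz]))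
      refine le_add_left ((ofReal_infDist_rpow_le_setLIntegral_truncatedRiesz hΓ hne hA
        (hs0.trans hd) hσ hyΓ hnear (r := 4 * ρ) (by linarith)).trans ?_)
      exact mul_le_mul_right (lintegral_mono_set (inter_subset_inter_left _ hball)) _
    · exact le_add_right (ENNReal.ofReal_le_ofReal
        (Real.rpow_le_rpow_of_nonpos (by positivity) hfar hs0))
  calc ∫⁻ y in closedBall z R \ Γ, ENNReal.ofReal (infDist y Γ ^ s) ∂μ
      ≤ ∫⁻ y in closedBall z R \ Γ, (ENNReal.ofReal ((2 * ρ) ^ s) +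
          C * ∫⁻ x, truncatedRiesz (s - d) (4 * ρ) (y - x) ∂ν) ∂μ :=
        setLIntegral_mono' (measurableSet_closedBall.diff hΓ.measurableSet) hpt
    _ ≤ ∫⁻ _ in closedBall z R, ENNReal.ofReal ((2 * ρ) ^ s) ∂μ +
          ∫⁻ y, C * ∫⁻ x, truncatedRiesz (s - d) (4 * ρ) (y - x) ∂ν ∂μ := by
        rw [lintegral_add_left measurable_const]
        exact add_le_add (lintegral_mono_set sdiff_subset) (setLIntegral_le_lintegral _ _)
    _ = ENNReal.ofReal ((2 * ρ) ^ s) * μ (closedBall z R) +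
          C * (ν univ * ∫⁻ y, truncatedRiesz (s - d) (4 * ρ) y ∂μ) := by
        rw [setLIntegral_const, lintegral_const_mul' _ _ ENNReal.ofReal_ne_top,
          lintegral_lintegral_sub (measurable_truncatedRiesz _ _)]
    _ < ⊤ := ENNReal.add_lt_top.2 ⟨ENNReal.mul_lt_top ENNReal.ofReal_lt_top
          measure_closedBall_lt_top, ENNReal.mul_lt_top ENNReal.ofReal_lt_top
          (ENNReal.mul_lt_top (measure_lt_top _ _)
            (lintegral_truncatedRiesz_lt_top (by linarith) _))⟩

lemma setLIntegral_infDist_rpow_lt_top [NormedSpace ℝ E] [FiniteDimensional ℝ E]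
    [μ.IsAddHaarMeasure] {σ : Measure E} {Γ : Set E} (hΓ : IsClosed Γ) (hne : Γ.Nonempty)
    {A d s ρ : ℝ} (hA : 0 < A) (hρ : 0 < ρ) (hd : 0 ≤ d) (hs : d - Module.finrank ℝ E < s)
    (hσ : ∀ ζ ∈ Γ, ∀ t, 0 < t → t ≤ ρ → ENNReal.ofReal (t ^ d / A) ≤ σ (ball ζ t ∩ Γ))
    (hfin : ∀ x R, σ (closedBall x R ∩ Γ) < ⊤) {B : Set E} (hB : Bornology.IsBounded B) :
    ∫⁻ y in B \ Γ, ENNReal.ofReal (infDist y Γ ^ s) ∂μ < ⊤ := by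
  have : ProperSpace E := FiniteDimensional.proper ℝ E
  obtain ⟨z, hz⟩ := hne
  obtain ⟨R, hBR⟩ := hB.subset_closedBall z
  refine (lintegral_mono_set (sdiff_subset_sdiff_left hBR)).trans_lt ?_
  rcases le_total s 0 with hs0 | hs0
  · exact setLIntegral_infDist_rpow_lt_top_of_nonpos hΓ ⟨z, hz⟩ hA hρ hd hs hs0 hσ hfin z R
  have hbound : ∀ y ∈ closedBall z R, ENNReal.ofReal (infDist y Γ ^ s) ≤ ENNReal.ofReal (R ^ s) :=
    fun y hy => ENNReal.ofReal_le_ofReal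
      (Real.rpow_le_rpow infDist_nonneg ((infDist_le_dist_of_mem hz).trans hy) hs0)
  calc ∫⁻ y in closedBall z R \ Γ, ENNReal.ofReal (infDist y Γ ^ s) ∂μ
      ≤ ∫⁻ _ in closedBall z R, ENNReal.ofReal (R ^ s) ∂μ :=
        (lintegral_mono_set sdiff_subset).trans (setLIntegral_mono' measurableSet_closedBall hbound)
    _ < ⊤ := by
        rw [setLIntegral_const]
        exact ENNReal.mul_lt_top ENNReal.ofReal_lt_top measure_closedBall_lt_top

end Potential

section Density

lemma tendsto_measure_ball_of_measure_singleton_eq_zero {X : Type*} [MetricSpace X]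
    [MeasurableSpace X] [OpensMeasurableSpace X] {m : Measure X} [IsFiniteMeasure m] {x : X}
    (hx : m {x} = 0) : Tendsto (fun r => m (ball x r)) (𝓝[>] 0) (𝓝 0) := by
  simpa [thickening_singleton, hx] using
    tendsto_measure_thickening_of_isClosed (μ := m) ⟨1, one_pos, measure_ne_top _ _⟩
      (isClosed_singleton (x := x))

lemma tendsto_div_ofReal_rpow_of_le {f : ℝ → ℝ≥0∞} {a b : ℝ} (hba : b ≤ a)
    (h : Tendsto (fun r => f r / ENNReal.ofReal (r ^ a)) (𝓝[>] 0) (𝓝 0)) :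
    Tendsto (fun r => f r / ENNReal.ofReal (r ^ b)) (𝓝[>] 0) (𝓝 0) := by
  refine tendsto_of_tendsto_of_tendsto_of_le_of_le' tendsto_const_nhds h
    (Eventually.of_forall fun _ => zero_le) ?_
  filter_upwards [Ioc_mem_nhdsGT one_pos] with r hr
  exact ENNReal.div_le_div_left
    (ENNReal.ofReal_le_ofReal (Real.rpow_le_rpow_of_exponent_ge hr.1 hr.2 hba)) _

variable {X : Type*} [PseudoMetricSpace X] [SecondCountableTopology X] [MeasurableSpace X]
  [BorelSpace X] {m σ : Measure X} {Γ : Set X} {A d r₀ : ℝ}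

lemma measure_setOf_frequently_lt_div_rpow_le
    (hσ : ∀ x ∈ Γ, ∀ r, 0 < r → r ≤ r₀ → σ (ball x r ∩ Γ) ≤ ENNReal.ofReal (A * r ^ d))
    {η : ℝ≥0∞} (hη : η ≠ 0) {ε : ℝ} (hε : 0 < ε) (hεr : 5 * ε ≤ r₀) :
    σ {x ∈ Γ | ∃ᶠ r in 𝓝[>] 0, η < m (ball x r) / ENNReal.ofReal (r ^ d)} ≤
      ENNReal.ofReal (A * 5 ^ d) * (η⁻¹ * m (thickening ε Γ)) := by
  let t : Set (X × ℝ) :=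
    {b | b.1 ∈ Γ ∧ 0 < b.2 ∧ b.2 < ε ∧ η < m (ball b.1 b.2) / ENNReal.ofReal (b.2 ^ d)}
  obtain ⟨v, hvt, hdisj, hcov⟩ := Vitali.exists_disjoint_subfamily_covering_enlargement_ball
    t Prod.fst Prod.snd ε (fun b hb => hb.2.2.1.le) 5 (by norm_num)
  have hv : v.Countable := hdisj.countable_of_isOpen (fun _ _ => isOpen_ball)
    fun b hb => nonempty_ball.2 (hvt hb).2.1
  have hcover : {x ∈ Γ | ∃ᶠ r in 𝓝[>] 0, η < m (ball x r) / ENNReal.ofReal (r ^ d)} ⊆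
      ⋃ b ∈ v, ball b.1 (5 * b.2) ∩ Γ := by
    rintro x ⟨hxΓ, hx⟩
    obtain ⟨r, hr, hr0, hrε⟩ := (hx.and_eventually (Ioo_mem_nhdsGT hε)).exists
    obtain ⟨b, hb, hxb⟩ := hcov (x, r) ⟨hxΓ, hr0, hrε, hr⟩
    exact mem_iUnion₂.2 ⟨b, hb, hxb (mem_ball_self hr0), hxΓ⟩
  have hball : ∀ b ∈ t, σ (ball b.1 (5 * b.2) ∩ Γ) ≤
      ENNReal.ofReal (A * 5 ^ d) * (η⁻¹ * m (ball b.1 b.2)) := by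
    rintro ⟨x, r⟩ ⟨hx, hr, hrε, hηr⟩
    have hr' : ENNReal.ofReal (r ^ d) ≤ η⁻¹ * m (ball x r) := by
      rw [mul_comm, ← div_eq_mul_inv, ENNReal.le_div_iff_mul_le (.inl hη) (.inl hηr.ne_top),
        mul_comm]
      exact ENNReal.mul_le_of_le_div hηr.le
    calc σ (ball x (5 * r) ∩ Γ)
        ≤ ENNReal.ofReal (A * (5 * r) ^ d) := hσ x hx _ (by positivity) (by linarith)
      _ = ENNReal.ofReal (A * 5 ^ d) * ENNReal.ofReal (r ^ d) := by
          rw [← ENNReal.ofReal_mul' (by positivity), Real.mul_rpow (by norm_num) hr.le, mul_assoc]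
      _ ≤ ENNReal.ofReal (A * 5 ^ d) * (η⁻¹ * m (ball x r)) := by gcongr
  calc σ {x ∈ Γ | ∃ᶠ r in 𝓝[>] 0, η < m (ball x r) / ENNReal.ofReal (r ^ d)}
      ≤ ∑' b : v, σ (ball b.1.1 (5 * b.1.2) ∩ Γ) :=
        (measure_mono hcover).trans (measure_biUnion_le _ hv _)
    _ ≤ ∑' b : v, ENNReal.ofReal (A * 5 ^ d) * (η⁻¹ * m (ball b.1.1 b.1.2)) :=
        ENNReal.tsum_le_tsum fun b => hball _ (hvt b.2)
    _ = ENNReal.ofReal (A * 5 ^ d) * (η⁻¹ * m (⋃ b ∈ v, ball b.1 b.2)) := by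
        rw [ENNReal.tsum_mul_left, ENNReal.tsum_mul_left,
          measure_biUnion hv hdisj fun _ _ => measurableSet_ball]
    _ ≤ ENNReal.ofReal (A * 5 ^ d) * (η⁻¹ * m (thickening ε Γ)) := by
        gcongr
        exact iUnion₂_subset fun b hb => (ball_subset_ball (hvt hb).2.2.1.le).trans
          (ball_subset_thickening (hvt hb).1 ε)

lemma ae_tendsto_measure_ball_div_rpow_of_measure_eq_zero [IsFiniteMeasure m] (hΓ : IsClosed Γ)
    (hm : m Γ = 0) (hr₀ : 0 < r₀)
    (hσ : ∀ x ∈ Γ, ∀ r, 0 < r → r ≤ r₀ → σ (ball x r ∩ Γ) ≤ ENNReal.ofReal (A * r ^ d)) :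
    ∀ᵐ x ∂σ.restrict Γ,
      Tendsto (fun r => m (ball x r) / ENNReal.ofReal (r ^ d)) (𝓝[>] 0) (𝓝 0) := by
  have hnull : ∀ η : ℝ≥0∞, η ≠ 0 →
      σ {x ∈ Γ | ∃ᶠ r in 𝓝[>] 0, η < m (ball x r) / ENNReal.ofReal (r ^ d)} = 0 := by
    intro η hη
    have hthick : Tendsto (fun ε => ENNReal.ofReal (A * 5 ^ d) * (η⁻¹ * m (thickening ε Γ)))
        (𝓝[>] 0) (𝓝 0) := by
      have := tendsto_measure_thickening_of_isClosed (μ := m) ⟨1, one_pos, measure_ne_top _ _⟩ hΓ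
      rw [hm] at this
      simpa using ENNReal.Tendsto.const_mul
        (ENNReal.Tendsto.const_mul this (.inr (ENNReal.inv_ne_top.2 hη)))
        (.inr ENNReal.ofReal_ne_top)
    refine le_antisymm (ge_of_tendsto hthick ?_) zero_le
    filter_upwards [Ioo_mem_nhdsGT (show 0 < r₀ / 5 by positivity)] with ε hε
    exact measure_setOf_frequently_lt_div_rpow_le hσ hη hε.1 (by linarith [hε.2])
  have hae : ∀ k : ℕ, ∀ᵐ x ∂σ, ¬ (x ∈ Γ ∧
      ∃ᶠ r in 𝓝[>] 0, (k : ℝ≥0∞)⁻¹ < m (ball x r) / ENNReal.ofReal (r ^ d)) := fun k =>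
    measure_eq_zero_iff_ae_notMem.1 (hnull _ (ENNReal.inv_ne_zero.2 (ENNReal.natCast_ne_top k)))
  refine (ae_restrict_iff' hΓ.measurableSet).2 ((ae_all_iff.2 hae).mono fun x hx hxΓ => ?_)
  refine ENNReal.tendsto_nhds_zero.2 fun ε hε => ?_
  obtain ⟨k, hk⟩ := ENNReal.exists_inv_nat_lt hε.ne'
  have hev := not_frequently.1 fun hfreq => hx k ⟨hxΓ, hfreq⟩
  exact hev.mono fun r hr => (not_lt.1 hr).trans hk.le

end Density

section Regularity

variable {Γ : Set (Euc n)} {d A : ℝ}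

lemma AhlforsRegular.exists_pos_forall_le (h : AhlforsRegular d A Γ) (hΓ : Γ.Nontrivial) :
    ∃ ρ > 0, ∀ ζ ∈ Γ, ∀ r, 0 < r → r ≤ ρ →
      ENNReal.ofReal (r ^ d / A) ≤ hm n d (ball ζ r ∩ Γ) ∧
        hm n d (ball ζ r ∩ Γ) ≤ ENNReal.ofReal (A * r ^ d) := by
  obtain ⟨x, hx, y, hy, hxy⟩ := hΓ
  refine ⟨dist x y, dist_pos.2 hxy, fun ζ hζ r hr hrxy => h.2.2 ζ hζ r hr ?_⟩
  calc ENNReal.ofReal r ≤ edist x y := by rw [edist_dist]; gcongr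
    _ ≤ ediam Γ := edist_le_ediam_of_mem hx hy

lemma AhlforsRegular.hm_closedBall_inter_lt_top (h : AhlforsRegular d A Γ) (hΓ : Γ.Nontrivial)
    (hΓc : IsClosed Γ) (x : Euc n) (R : ℝ) : hm n d (closedBall x R ∩ Γ) < ⊤ := by
  obtain ⟨ρ, hρ, hreg⟩ := h.exists_pos_forall_le hΓ
  refine ((isCompact_closedBall x R).inter_right hΓc).measure_lt_top_of_nhdsWithin fun y hy =>
    ⟨ball y ρ ∩ Γ, ?_, (hreg y hy.2 ρ hρ le_rfl).2.trans_lt ENNReal.ofReal_lt_top⟩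
  exact mem_of_superset (inter_mem_nhdsWithin _ (ball_mem_nhds y hρ)) fun z hz => ⟨hz.2, hz.1.2⟩

lemma AhlforsRegular.setLIntegral_infDist_rpow_lt_top (h : AhlforsRegular d A Γ)
    (hΓ : Γ.Nontrivial) (hΓc : IsClosed Γ) (hd : 0 ≤ d) {s : ℝ} (hs : -(n - d) < s)
    {B : Set (Euc n)} (hB : Bornology.IsBounded B) :
    ∫⁻ y in B \ Γ, ENNReal.ofReal (infDist y Γ ^ s) < ⊤ := by
  obtain ⟨ρ, hρ, hreg⟩ := h.exists_pos_forall_le hΓ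
  exact Paper.setLIntegral_infDist_rpow_lt_top hΓc hΓ.nonempty h.2.1 hρ hd
    (by rw [finrank_euclideanSpace_fin]; linarith) (fun ζ hζ t ht htρ => (hreg ζ hζ t ht htρ).1)
    (h.hm_closedBall_inter_lt_top hΓ hΓc) hB

end Regularity

section Distance

variable {Ω : Set (Euc n)}

lemma continuous_bd : Continuous (bd Ω) := continuous_infDist_pt _

lemma bd_nonneg (x : Euc n) : 0 ≤ bd Ω x := infDist_nonneg

lemma bd_le_bd_add_dist (x y : Euc n) : bd Ω x ≤ bd Ω y + dist x y :=
  infDist_le_infDist_add_dist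

lemma bd_le_dist {x ζ : Euc n} (hζ : ζ ∈ frontier Ω) : bd Ω x ≤ dist x ζ :=
  infDist_le_dist_of_mem hζ

lemma bd_pos (hΩ : IsOpen Ω) (hne : (frontier Ω).Nonempty) {x : Euc n} (hx : x ∈ Ω) :
    0 < bd Ω x :=
  (isClosed_frontier.notMem_iff_infDist_pos hne).1 fun h =>
    (hΩ.inter_frontier_eq.subset ⟨hx, h⟩).elim

lemma ball_bd_subset (hΩ : IsOpen Ω) {x : Euc n} (hx : x ∈ Ω) : ball x (bd Ω x) ⊆ Ω := by
  rcases (bd_nonneg (Ω := Ω) x).eq_or_lt with h | h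
  · simp [← h]
  refine isPreconnected_ball.subset_of_closure_inter_subset hΩ ⟨x, mem_ball_self h, hx⟩ ?_
  rintro y ⟨hyΩ, hy⟩
  rw [closure_eq_self_union_frontier] at hyΩ
  exact hyΩ.resolve_right (disjoint_left.1 disjoint_ball_infDist hy)

end Distance

section WhitneyAverage

variable {F : Type*} [NormedAddCommGroup F] {Ω : Set (Euc n)} {c : ℝ} {β : ℝ≥0∞} {u : Euc n → F}

lemma ball_mul_bd_subset (hΩ : IsOpen Ω) (hc : c ≤ 1) {x : Euc n} (hx : x ∈ Ω) :
    ball x (c * bd Ω x) ⊆ Ω :=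
  (ball_subset_ball (mul_le_of_le_one_left (bd_nonneg x) hc)).trans (ball_bd_subset hΩ hx)

lemma laverage_enorm_le_wAvg (hΩ : IsOpen Ω) (hc : c ≤ 1) (hβ : 1 ≤ β)
    (hu : AEStronglyMeasurable u (volume.restrict Ω)) {y : Euc n} (hy : y ∈ Ω) :
    ⨍⁻ z in ball y (c * bd Ω y), ‖u z‖ₑ ∂volume ≤ wAvg Ω c β u y :=
  laverage_enorm_le_eLpNorm_cond hβ measure_ball_lt_top.ne
    (hu.mono_measure (Measure.restrict_mono_set _ (ball_mul_bd_subset hΩ hc hy)))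

lemma volume_ball_mul {a r : ℝ} (ha : 0 < a) (x : Euc n) :
    volume (ball x (a * r)) = ENNReal.ofReal (a ^ n) * volume (ball x r) := by
  rw [Measure.addHaar_ball_mul_of_pos _ _ ha, finrank_euclideanSpace_fin,
    Measure.addHaar_ball_center _ x]

lemma le_setLIntegral_inv_volume_ball_mul_bd (hΩ : IsOpen Ω) (hne : (frontier Ω).Nonempty)
    (hc : c ≤ 1) {t : ℝ} (ht : 0 < t) (htc : t ≤ c / 2) {z : Euc n} (hz : z ∈ Ω) :
    ENNReal.ofReal ((t / 2) ^ n) ≤ ∫⁻ y in ball z (t * bd Ω z) ∩ {y | z ∈ ball y (c * bd Ω y)},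
      (volume (ball y (c * bd Ω y)))⁻¹ := by
  have hδ := bd_pos hΩ hne hz
  have hsub : ball z (t * bd Ω z) ⊆ {y | z ∈ ball y (c * bd Ω y)} := fun y hy => by
    have hzy : dist z y < t * bd Ω z := mem_ball'.1 hy
    have := bd_le_bd_add_dist (Ω := Ω) z y
    have hzy' : bd Ω z ≤ 2 * bd Ω y := by nlinarith
    calc dist z y < t * bd Ω z := hzy
      _ ≤ c / 2 * (2 * bd Ω y) := by gcongr; linarith
      _ = c * bd Ω y := by ring
  have hvol : ∀ y ∈ ball z (t * bd Ω z),
      (volume (ball z (2 * bd Ω z)))⁻¹ ≤ (volume (ball y (c * bd Ω y)))⁻¹ := fun y hy => by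
    have hyz : dist y z < t * bd Ω z := hy
    have := bd_le_bd_add_dist (Ω := Ω) y z
    rw [Measure.addHaar_ball_center, Measure.addHaar_ball_center _ y]
    refine ENNReal.inv_le_inv.2 (measure_mono (ball_subset_ball ?_))
    nlinarith [bd_nonneg (Ω := Ω) y]
  calc ENNReal.ofReal ((t / 2) ^ n)
      = (volume (ball z (2 * bd Ω z)))⁻¹ * volume (ball z (t * bd Ω z)) := by
        rw [show t * bd Ω z = t / 2 * (2 * bd Ω z) by ring, volume_ball_mul (half_pos ht),
          mul_left_comm, ENNReal.inv_mul_cancel (measure_ball_pos _ _ (by positivity)).ne'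
            measure_ball_lt_top.ne, mul_one]
    _ = ∫⁻ _ in ball z (t * bd Ω z), (volume (ball z (2 * bd Ω z)))⁻¹ := by rw [setLIntegral_const]
    _ ≤ ∫⁻ y in ball z (t * bd Ω z), (volume (ball y (c * bd Ω y)))⁻¹ :=
        setLIntegral_mono' measurableSet_ball hvol
    _ = _ := by rw [inter_eq_left.2 hsub]

lemma setLIntegral_enorm_mul_le_setLIntegral_wAvg (hΩ : IsOpen Ω) (hne : (frontier Ω).Nonempty)
    (hc : c ≤ 1) (hβ : 1 ≤ β) (hu : AEStronglyMeasurable u (volume.restrict Ω))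
    {t : ℝ} (ht : 0 < t) (htc : t ≤ c / 2) {E U : Set (Euc n)} (hE : MeasurableSet E)
    (hU : MeasurableSet U) (hEU : ∀ z ∈ E ∩ Ω, ball z (t * bd Ω z) ⊆ U) :
    (∫⁻ z in E ∩ Ω, ‖u z‖ₑ) * ENNReal.ofReal ((t / 2) ^ n) ≤ ∫⁻ y in U ∩ Ω, wAvg Ω c β u y := by
  have hf : AEMeasurable (Ω.indicator fun z => ‖u z‖ₑ) :=
    (aemeasurable_indicator_iff hΩ.measurableSet).2 hu.enorm
  calc (∫⁻ z in E ∩ Ω, ‖u z‖ₑ) * ENNReal.ofReal ((t / 2) ^ n)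
      = (∫⁻ z in E ∩ Ω, Ω.indicator (fun z => ‖u z‖ₑ) z) * ENNReal.ofReal ((t / 2) ^ n) := by
        rw [setLIntegral_indicator hΩ.measurableSet, inter_comm Ω, inter_assoc, inter_self]
    _ ≤ ∫⁻ y in U ∩ Ω, ⨍⁻ z in ball y (c * bd Ω y), Ω.indicator (fun z => ‖u z‖ₑ) z ∂volume := by
        refine setLIntegral_mul_le_setLIntegral_laverage_ball hf
          (continuous_bd.measurable.const_mul c) (hE.inter hΩ.measurableSet) fun z hz => ?_
        refine (le_setLIntegral_inv_volume_ball_mul_bd hΩ hne hc ht htc hz.2).trans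
          (lintegral_mono_set (inter_subset_inter_left _ (subset_inter (hEU z hz) ?_)))
        exact ball_mul_bd_subset hΩ (by linarith) hz.2
    _ ≤ ∫⁻ y in U ∩ Ω, wAvg Ω c β u y := by
        refine setLIntegral_mono' (hU.inter hΩ.measurableSet) fun y hy => ?_
        refine le_trans ?_ (laverage_enorm_le_wAvg hΩ hc hβ hu hy.2)
        exact lintegral_mono (indicator_le_self _ _)

lemma integrableOn_of_setLIntegral_wAvg_lt_top (hΩ : IsOpen Ω) (hne : (frontier Ω).Nonempty)
    (hc0 : 0 < c) (hc : c ≤ 1) (hβ : 1 ≤ β) (hu : AEStronglyMeasurable u (volume.restrict Ω))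
    {K : Set (Euc n)} (hK : IsCompact K) {ε : ℝ} (hε : 0 < ε)
    (h : ∫⁻ y in thickening ε K ∩ Ω, wAvg Ω c β u y < ⊤) : IntegrableOn u (K ∩ Ω) := by
  obtain ⟨ζ, hζ⟩ := hne
  obtain ⟨D, hD, hKD⟩ := hK.isBounded.subset_ball_lt 0 ζ
  have ht : 0 < min (c / 2) (ε / D) := lt_min (half_pos hc0) (div_pos hε hD)
  have hball : ∀ z ∈ K ∩ Ω, ball z (min (c / 2) (ε / D) * bd Ω z) ⊆ thickening ε K := by
    rintro z ⟨hzK, -⟩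
    refine (ball_subset_ball ?_).trans (ball_subset_thickening hzK ε)
    calc min (c / 2) (ε / D) * bd Ω z ≤ ε / D * D :=
          mul_le_mul (min_le_right _ _) ((bd_le_dist hζ).trans (mem_ball.1 (hKD hzK)).le)
            (bd_nonneg z) (by positivity)
      _ = ε := div_mul_cancel₀ _ hD.ne'
  have key := (setLIntegral_enorm_mul_le_setLIntegral_wAvg hΩ ⟨ζ, hζ⟩ hc hβ hu ht (min_le_left _ _)
    hK.measurableSet isOpen_thickening.measurableSet hball).trans_lt h
  refine ⟨hu.mono_measure (Measure.restrict_mono_set _ inter_subset_right), ?_⟩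
  exact ENNReal.lt_top_of_mul_ne_top_left key.ne (ENNReal.ofReal_pos.2 (by positivity)).ne'

end WhitneyAverage

section AverageNorm

variable {F : Type*} [NormedAddCommGroup F] {Ω Ψ : Set (Euc n)} {d c q s : ℝ} {β p : ℝ≥0∞}
  {u : Euc n → F}

lemma avNormOn_mono {Ψ' : Set (Euc n)} (h : Ψ ⊆ Ψ') :
    avNormOn Ω Ψ d c β p s u ≤ avNormOn Ω Ψ' d c β p s u := by
  unfold avNormOn
  split_ifs
  · exact biSup_mono h
  · gcongr

lemma wAvg_le_avNormOn_top_mul_rpow {y : Euc n} (hy : y ∈ Ψ) (hδ : 0 < bd Ω y) :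
    wAvg Ω c β u y ≤ avNormOn Ω Ψ d c β ⊤ (s + 1) u * ENNReal.ofReal (bd Ω y ^ s) := by
  have hsup : wAvg Ω c β u y * ENNReal.ofReal (bd Ω y) ^ (1 - (s + 1)) ≤
      avNormOn Ω Ψ d c β ⊤ (s + 1) u := by
    rw [avNormOn, if_pos rfl]
    exact le_iSup₂_of_le y hy le_rfl
  calc wAvg Ω c β u y
      = wAvg Ω c β u y * ENNReal.ofReal (bd Ω y) ^ (1 - (s + 1)) * ENNReal.ofReal (bd Ω y ^ s) := by
        rw [← ENNReal.ofReal_rpow_of_pos hδ, mul_assoc,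
          ← ENNReal.rpow_add _ _ (ENNReal.ofReal_pos.2 hδ).ne' ENNReal.ofReal_ne_top]
        simp
    _ ≤ avNormOn Ω Ψ d c β ⊤ (s + 1) u * ENNReal.ofReal (bd Ω y ^ s) := by gcongr

/-- The measure `(W_{c,β} u)^q δ^{d-n-qs} dy` on `Ψ`, whose total mass is the `q`-th power of the
norm `avNormOn Ω Ψ d c β q (s + 1) u`. -/
def avMeasure (Ω Ψ : Set (Euc n)) (d c : ℝ) (β : ℝ≥0∞) (q s : ℝ) (u : Euc n → F) :
    Measure (Euc n) :=
  (volume.restrict Ψ).withDensity fun y =>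
    wAvg Ω c β u y ^ q * ENNReal.ofReal (bd Ω y) ^ (d - n - q * s)

lemma avMeasure_univ :
    avMeasure Ω Ψ d c β q s u univ =
      ∫⁻ y in Ψ, wAvg Ω c β u y ^ q * ENNReal.ofReal (bd Ω y) ^ (d - n - q * s) := by
  rw [avMeasure, withDensity_apply _ MeasurableSet.univ, Measure.restrict_univ]

lemma setLIntegral_le_avMeasure {B S : Set (Euc n)} (hS : MeasurableSet S)
    (hSB : S ⊆ B) (hSΨ : S ⊆ Ψ) :
    ∫⁻ y in S, wAvg Ω c β u y ^ q * ENNReal.ofReal (bd Ω y) ^ (d - n - q * s) ≤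
      avMeasure Ω Ψ d c β q s u B := by
  refine le_trans ?_ (measure_mono hSB)
  rw [avMeasure, withDensity_apply _ hS, Measure.restrict_restrict_of_subset hSΨ]

lemma isFiniteMeasure_avMeasure (hp : p ≠ 0) (hp_top : p ≠ ⊤)
    (h : avNormOn Ω Ψ d c β p (s + 1) u < ⊤) :
    IsFiniteMeasure (avMeasure Ω Ψ d c β p.toReal s u) := by
  refine ⟨?_⟩
  rw [avNormOn, if_neg hp_top,
    ENNReal.rpow_lt_top_iff_of_pos (one_div_pos.2 (ENNReal.toReal_pos hp hp_top))] at h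
  rw [avMeasure_univ]
  convert h using 5
  ring

lemma avMeasure_frontier (hΩ : IsOpen Ω) (hΨ : Ψ ⊆ Ω) :
    avMeasure Ω Ψ d c β q s u (frontier Ω) = 0 := by
  refine withDensity_absolutelyContinuous _ _ ?_
  rw [Measure.restrict_apply isClosed_frontier.measurableSet,
    ((disjoint_frontier_iff_isOpen.2 hΩ).mono_right hΨ).inter_eq, measure_empty]

lemma le_rpow_add_rpow_mul_rpow {e : ℝ≥0∞} (he0 : e ≠ 0) (he : e ≠ ⊤) (hq : 1 ≤ q) (w : ℝ≥0∞) :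
    w ≤ e ^ s + w ^ q * e ^ (s - q * s) := by
  have hle : w * e ^ (-s) ≤ 1 + (w * e ^ (-s)) ^ q := by
    rcases le_total (w * e ^ (-s)) 1 with h | h
    · exact le_add_right h
    · exact le_add_left (ENNReal.le_rpow_self_of_one_le h hq)
  calc w = e ^ s * (w * e ^ (-s)) := by
        rw [mul_left_comm, ← ENNReal.rpow_add _ _ he0 he, add_neg_cancel, ENNReal.rpow_zero,
          mul_one]
    _ ≤ e ^ s * (1 + (w * e ^ (-s)) ^ q) := by gcongr
    _ = e ^ s + w ^ q * e ^ (s - q * s) := by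
        rw [ENNReal.mul_rpow_of_nonneg _ _ (by linarith), ← ENNReal.rpow_mul, mul_add, mul_one,
          mul_left_comm, ← ENNReal.rpow_add _ _ he0 he]
        ring_nf

lemma setLIntegral_wAvg_lt_top_of_avMeasure (hΩ : IsOpen Ω) (hne : (frontier Ω).Nonempty)
    (hΨ : MeasurableSet Ψ) (hΨΩ : Ψ ⊆ Ω) (hΨb : Bornology.IsBounded Ψ) (hq : 1 ≤ q)
    (hs : -(n - d) ≤ s) (hδs : ∫⁻ y in Ψ, ENNReal.ofReal (bd Ω y ^ s) < ⊤)
    [IsFiniteMeasure (avMeasure Ω Ψ d c β q s u)] : ∫⁻ y in Ψ, wAvg Ω c β u y < ⊤ := by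
  obtain ⟨ζ, hζ⟩ := hne
  obtain ⟨D, hΨD⟩ := hΨb.subset_closedBall ζ
  have hpt : ∀ y ∈ Ψ, wAvg Ω c β u y ≤ ENNReal.ofReal (bd Ω y ^ s) +
      ENNReal.ofReal D ^ (s + (n - d)) *
        (wAvg Ω c β u y ^ q * ENNReal.ofReal (bd Ω y) ^ (d - n - q * s)) := fun y hy => by
    have hδ := bd_pos hΩ ⟨ζ, hζ⟩ (hΨΩ hy)
    have hδ0 := (ENNReal.ofReal_pos.2 hδ).ne'
    have hδD : bd Ω y ≤ D := (bd_le_dist hζ).trans (hΨD hy)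
    calc wAvg Ω c β u y
        ≤ ENNReal.ofReal (bd Ω y) ^ s +
            wAvg Ω c β u y ^ q * ENNReal.ofReal (bd Ω y) ^ (s - q * s) :=
          le_rpow_add_rpow_mul_rpow hδ0 ENNReal.ofReal_ne_top hq _
      _ = ENNReal.ofReal (bd Ω y ^ s) + ENNReal.ofReal (bd Ω y) ^ (s + (n - d)) *
            (wAvg Ω c β u y ^ q * ENNReal.ofReal (bd Ω y) ^ (d - n - q * s)) := by
          rw [mul_left_comm, ← ENNReal.rpow_add _ _ hδ0 ENNReal.ofReal_ne_top,
            ENNReal.ofReal_rpow_of_pos hδ]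
          ring_nf
      _ ≤ _ := by gcongr; linarith
  calc ∫⁻ y in Ψ, wAvg Ω c β u y
      ≤ ∫⁻ y in Ψ, (ENNReal.ofReal (bd Ω y ^ s) + ENNReal.ofReal D ^ (s + (n - d)) *
        (wAvg Ω c β u y ^ q * ENNReal.ofReal (bd Ω y) ^ (d - n - q * s))) :=
        setLIntegral_mono' hΨ hpt
    _ = (∫⁻ y in Ψ, ENNReal.ofReal (bd Ω y ^ s)) +
          ENNReal.ofReal D ^ (s + (n - d)) * avMeasure Ω Ψ d c β q s u univ := by
        have hD : ENNReal.ofReal D ^ (s + (n - d)) ≠ ⊤ :=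
          ENNReal.rpow_ne_top_of_nonneg (by linarith) ENNReal.ofReal_ne_top
        rw [lintegral_add_left (continuous_bd.measurable.pow_const s).ennreal_ofReal,
          lintegral_const_mul' _ _ hD, avMeasure_univ]
    _ < ⊤ := ENNReal.add_lt_top.2 ⟨hδs, ENNReal.mul_lt_top (ENNReal.rpow_lt_top_of_nonneg
        (by linarith) ENNReal.ofReal_ne_top) (measure_lt_top _ _)⟩

lemma setLIntegral_wAvg_lt_top_of_avNormOn (hΩ : IsOpen Ω) (hne : (frontier Ω).Nonempty)
    (hΨ : MeasurableSet Ψ) (hΨΩ : Ψ ⊆ Ω) (hΨb : Bornology.IsBounded Ψ) (hp : 1 ≤ p)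
    (hs : -(n - d) ≤ s) (hδs : ∫⁻ y in Ψ, ENNReal.ofReal (bd Ω y ^ s) < ⊤)
    (h : avNormOn Ω Ψ d c β p (s + 1) u < ⊤) : ∫⁻ y in Ψ, wAvg Ω c β u y < ⊤ := by
  rcases eq_or_ne p ⊤ with rfl | hp_top
  · calc ∫⁻ y in Ψ, wAvg Ω c β u y
        ≤ ∫⁻ y in Ψ, avNormOn Ω Ψ d c β ⊤ (s + 1) u * ENNReal.ofReal (bd Ω y ^ s) :=
          setLIntegral_mono' hΨ fun y hy =>
            wAvg_le_avNormOn_top_mul_rpow hy (bd_pos hΩ hne (hΨΩ hy))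
      _ < ⊤ := by
          rw [lintegral_const_mul' _ _ h.ne]
          exact ENNReal.mul_lt_top h hδs
  · have := isFiniteMeasure_avMeasure (one_pos.trans_le hp).ne' hp_top h
    exact setLIntegral_wAvg_lt_top_of_avMeasure hΩ hne hΨ hΨΩ hΨb
      (ENNReal.toReal_mono hp_top hp) hs hδs

end AverageNorm

section Trace

variable {Ω V : Set (Euc n)} {d A c q s : ℝ} {β p : ℝ≥0∞} {u : Euc n → ℝ} {x : Euc n}

lemma trZeroAt_of_tendsto_setLIntegral_enorm (hu : AEStronglyMeasurable u (volume.restrict Ω))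
    (h : Tendsto (fun r => (∫⁻ y in ball x r ∩ Ω, ‖u y‖ₑ) / ENNReal.ofReal (r ^ n))
      (𝓝[>] 0) (𝓝 0)) : TrZeroAt Ω u x := by
  refine ((ENNReal.tendsto_toReal ENNReal.zero_ne_top).comp h).congr' ?_
  filter_upwards [self_mem_nhdsWithin] with r hr
  have hnorm : ∫ y in ball x r ∩ Ω, |u y| = (∫⁻ y in ball x r ∩ Ω, ‖u y‖ₑ).toReal :=
    integral_norm_eq_lintegral_enorm
      (hu.mono_measure (Measure.restrict_mono_set _ inter_subset_right))
  rw [Function.comp_apply, ENNReal.toReal_div, ENNReal.toReal_ofReal (pow_nonneg (le_of_lt hr) n),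
    hnorm, one_div_mul_eq_div]

lemma setLIntegral_enorm_ball_le_setLIntegral_wAvg (hΩ : IsOpen Ω) (hx : x ∈ frontier Ω)
    (hc0 : 0 < c) (hc : c ≤ 1) (hβ : 1 ≤ β) (hu : AEStronglyMeasurable u (volume.restrict Ω))
    (r : ℝ) : (∫⁻ y in ball x r ∩ Ω, ‖u y‖ₑ) * ENNReal.ofReal ((c / 2 / 2) ^ n) ≤
      ∫⁻ y in ball x (2 * r) ∩ Ω, wAvg Ω c β u y := by
  refine setLIntegral_enorm_mul_le_setLIntegral_wAvg hΩ ⟨x, hx⟩ hc hβ hu (half_pos hc0) le_rfl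
    measurableSet_ball measurableSet_ball fun z hz => ball_subset_ball' ?_
  have hzr : dist z x < r := hz.1
  nlinarith [bd_le_dist (x := z) hx, bd_nonneg (Ω := Ω) z]

lemma trZeroAt_of_tendsto_setLIntegral_wAvg (hΩ : IsOpen Ω) (hx : x ∈ frontier Ω)
    (hc0 : 0 < c) (hc : c ≤ 1) (hβ : 1 ≤ β) (hu : AEStronglyMeasurable u (volume.restrict Ω))
    (h : Tendsto (fun r => (∫⁻ y in ball x r ∩ Ω, wAvg Ω c β u y) / ENNReal.ofReal (r ^ n))
      (𝓝[>] 0) (𝓝 0)) : TrZeroAt Ω u x := by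
  refine trZeroAt_of_tendsto_setLIntegral_enorm hu ?_
  let C : ℝ≥0∞ := ENNReal.ofReal (2 ^ n) / ENNReal.ofReal ((c / 2 / 2) ^ n)
  have hc4 : ENNReal.ofReal ((c / 2 / 2) ^ n) ≠ 0 := (ENNReal.ofReal_pos.2 (by positivity)).ne'
  have hdouble : Tendsto (fun r : ℝ => 2 * r) (𝓝[>] 0) (𝓝[>] 0) := by
    refine tendsto_nhdsWithin_iff.2 ⟨?_, eventually_mem_nhdsWithin.mono fun r hr => ?_⟩
    · exact (Continuous.tendsto' (by fun_prop) 0 0 (mul_zero 2)).mono_left nhdsWithin_le_nhds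
    · exact mul_pos two_pos (mem_Ioi.1 hr)
  have hlim := ENNReal.Tendsto.const_mul (a := C) (h.comp hdouble)
    (.inr (ENNReal.div_ne_top ENNReal.ofReal_ne_top hc4))
  rw [mul_zero] at hlim
  refine tendsto_of_tendsto_of_tendsto_of_le_of_le tendsto_const_nhds hlim
    (fun _ => zero_le) fun r => ?_
  have h2 : ENNReal.ofReal (2 ^ n) ≠ 0 := (ENNReal.ofReal_pos.2 (by positivity)).ne'
  calc (∫⁻ y in ball x r ∩ Ω, ‖u y‖ₑ) / ENNReal.ofReal (r ^ n)
      ≤ ((∫⁻ y in ball x (2 * r) ∩ Ω, wAvg Ω c β u y) / ENNReal.ofReal ((c / 2 / 2) ^ n)) /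
          ENNReal.ofReal (r ^ n) := by
        gcongr
        exact (ENNReal.le_div_iff_mul_le (.inl hc4) (.inl ENNReal.ofReal_ne_top)).2
          (setLIntegral_enorm_ball_le_setLIntegral_wAvg hΩ hx hc0 hc hβ hu r)
    _ = C * ((∫⁻ y in ball x (2 * r) ∩ Ω, wAvg Ω c β u y) / ENNReal.ofReal ((2 * r) ^ n)) := by
        rw [mul_pow, ENNReal.ofReal_mul (by positivity),
          ← ENNReal.mul_div_mul_left _ _ h2 ENNReal.ofReal_ne_top]
        simp only [C, div_eq_mul_inv]
        ring

lemma trZeroAt_of_avNormOn_top_lt_top (hΩ : IsOpen Ω) (hV : IsOpen V) (hxV : x ∈ V)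
    (hx : x ∈ frontier Ω) (hc0 : 0 < c) (hc : c ≤ 1) (hβ : 1 ≤ β)
    (hu : AEStronglyMeasurable u (volume.restrict Ω)) (hs : 0 < s)
    (h : avNormOn Ω (V ∩ Ω) d c β ⊤ (s + 1) u < ⊤) : TrZeroAt Ω u x := by
  refine trZeroAt_of_tendsto_setLIntegral_wAvg hΩ hx hc0 hc hβ hu ?_
  let N := avNormOn Ω (V ∩ Ω) d c β ⊤ (s + 1) u
  have hlim : Tendsto (fun r : ℝ => volume (ball x 1) * N * ENNReal.ofReal (r ^ s))
      (𝓝[>] 0) (𝓝 0) := by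
    have hrs : Tendsto (fun r : ℝ => ENNReal.ofReal (r ^ s)) (𝓝[>] 0) (𝓝 0) := by
      refine (Continuous.tendsto' ?_ 0 0 ?_).mono_left nhdsWithin_le_nhds
      · exact ENNReal.continuous_ofReal.comp (Real.continuous_rpow_const hs.le)
      · rw [Real.zero_rpow hs.ne', ENNReal.ofReal_zero]
    simpa only [mul_zero] using ENNReal.Tendsto.const_mul hrs
      (.inr (ENNReal.mul_ne_top measure_ball_lt_top.ne h.ne))
  refine tendsto_of_tendsto_of_tendsto_of_le_of_le' tendsto_const_nhds hlim
    (Eventually.of_forall fun _ => zero_le) ?_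
  obtain ⟨ε, hε, hεV⟩ := Metric.isOpen_iff.1 hV x hxV
  filter_upwards [Ioo_mem_nhdsGT hε] with r hr
  have hpt : ∀ y ∈ ball x r ∩ Ω, wAvg Ω c β u y ≤ N * ENNReal.ofReal (r ^ s) := fun y hy => by
    have hyV : y ∈ V ∩ Ω := ⟨hεV (ball_subset_ball hr.2.le hy.1), hy.2⟩
    refine (wAvg_le_avNormOn_top_mul_rpow (d := d) (s := s) hyV (bd_pos hΩ ⟨x, hx⟩ hy.2)).trans ?_
    gcongr
    · exact bd_nonneg y
    · exact (bd_le_dist hx).trans (mem_ball.1 hy.1).le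
  refine ENNReal.div_le_of_le_mul ?_
  calc ∫⁻ y in ball x r ∩ Ω, wAvg Ω c β u y
      ≤ ∫⁻ _ in ball x r ∩ Ω, N * ENNReal.ofReal (r ^ s) :=
        setLIntegral_mono' (measurableSet_ball.inter hΩ.measurableSet) hpt
    _ ≤ N * ENNReal.ofReal (r ^ s) * volume (ball x (r * 1)) := by
        rw [setLIntegral_const, mul_one]
        gcongr
        exact inter_subset_left
    _ = volume (ball x 1) * N * ENNReal.ofReal (r ^ s) * ENNReal.ofReal (r ^ n) := by
        rw [volume_ball_mul hr.1]
        ring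

lemma setLIntegral_wAvg_rpow_le_avMeasure (hΩ : IsOpen Ω) (hx : x ∈ frontier Ω)
    (hdq : d ≤ n + q * s) {r : ℝ} (hrV : ball x r ⊆ V) :
    ∫⁻ y in ball x r ∩ Ω, wAvg Ω c β u y ^ q ≤
      ENNReal.ofReal r ^ (n - d + q * s) * avMeasure Ω (V ∩ Ω) d c β q s u (ball x r) := by
  have hmeas : MeasurableSet (ball x r ∩ Ω) := measurableSet_ball.inter hΩ.measurableSet
  have hpt : ∀ y ∈ ball x r ∩ Ω, wAvg Ω c β u y ^ q ≤ ENNReal.ofReal r ^ (n - d + q * s) *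
      (wAvg Ω c β u y ^ q * ENNReal.ofReal (bd Ω y) ^ (d - n - q * s)) := fun y hy => by
    have hδ := bd_pos hΩ ⟨x, hx⟩ hy.2
    calc wAvg Ω c β u y ^ q
        = ENNReal.ofReal (bd Ω y) ^ (n - d + q * s) *
            (wAvg Ω c β u y ^ q * ENNReal.ofReal (bd Ω y) ^ (d - n - q * s)) := by
          rw [mul_left_comm, ← ENNReal.rpow_add _ _ (ENNReal.ofReal_pos.2 hδ).ne'
            ENNReal.ofReal_ne_top, show n - d + q * s + (d - n - q * s) = 0 by ring,
            ENNReal.rpow_zero, mul_one]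
      _ ≤ _ := by
          gcongr
          · linarith
          · exact (bd_le_dist hx).trans (mem_ball.1 hy.1).le
  calc ∫⁻ y in ball x r ∩ Ω, wAvg Ω c β u y ^ q
      ≤ ∫⁻ y in ball x r ∩ Ω, ENNReal.ofReal r ^ (n - d + q * s) *
          (wAvg Ω c β u y ^ q * ENNReal.ofReal (bd Ω y) ^ (d - n - q * s)) :=
        setLIntegral_mono' hmeas hpt
    _ = ENNReal.ofReal r ^ (n - d + q * s) * ∫⁻ y in ball x r ∩ Ω,
          wAvg Ω c β u y ^ q * ENNReal.ofReal (bd Ω y) ^ (d - n - q * s) :=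
        lintegral_const_mul' _ _
          (ENNReal.rpow_ne_top_of_nonneg (by linarith) ENNReal.ofReal_ne_top)
    _ ≤ _ := by
        gcongr
        exact setLIntegral_le_avMeasure hmeas inter_subset_left (inter_subset_inter_left _ hrV)

lemma setLIntegral_wAvg_div_rpow_le_avMeasure (hΩ : IsOpen Ω) (hx : x ∈ frontier Ω) (hq : 1 ≤ q)
    (hdq : d ≤ n + q * s) {r : ℝ} (hr : 0 < r) (hrV : ball x r ⊆ V) :
    ((∫⁻ y in ball x r ∩ Ω, wAvg Ω c β u y) / ENNReal.ofReal (r ^ n)) ^ q ≤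
      volume (ball x 1) ^ (q - 1) *
        (avMeasure Ω (V ∩ Ω) d c β q s u (ball x r) / ENNReal.ofReal (r ^ (d - q * s))) := by
  let e := ENNReal.ofReal r
  have he0 : e ≠ 0 := (ENNReal.ofReal_pos.2 hr).ne'
  have he : e ≠ ⊤ := ENNReal.ofReal_ne_top
  have hen : ENNReal.ofReal (r ^ n) = e ^ (n : ℝ) := by
    rw [ENNReal.ofReal_pow hr.le, ENNReal.rpow_natCast]
  have hed : ENNReal.ofReal (r ^ (d - q * s)) = e ^ (d - q * s) :=
    (ENNReal.ofReal_rpow_of_pos hr).symm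
  have hvol : volume (ball x r ∩ Ω) ≤ e ^ (n : ℝ) * volume (ball x 1) := by
    rw [← hen, ← volume_ball_mul hr, mul_one]
    exact measure_mono inter_subset_left
  have hjensen : (∫⁻ y in ball x r ∩ Ω, wAvg Ω c β u y) ^ q ≤
      (e ^ (n : ℝ) * volume (ball x 1)) ^ (q - 1) *
        (e ^ (n - d + q * s) * avMeasure Ω (V ∩ Ω) d c β q s u (ball x r)) := by
    refine (rpow_lintegral_le hq _).trans ?_
    rw [Measure.restrict_apply_univ]
    gcongr
    exact setLIntegral_wAvg_rpow_le_avMeasure hΩ hx hdq hrV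
  rw [ENNReal.div_rpow_of_nonneg _ _ (by linarith)]
  refine (ENNReal.div_le_div_right hjensen _).trans_eq ?_
  rw [hen, hed, ENNReal.mul_rpow_of_nonneg _ _ (by linarith),
    div_eq_mul_inv, div_eq_mul_inv, ← ENNReal.rpow_neg, ← ENNReal.rpow_mul, ← ENNReal.rpow_mul,
    ← ENNReal.rpow_neg]
  have hexp : e ^ (n * (q - 1)) * e ^ (n - d + q * s) * e ^ (n * -q) = e ^ (-(d - q * s)) := by
    rw [← ENNReal.rpow_add _ _ he0 he, ← ENNReal.rpow_add _ _ he0 he]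
    ring_nf
  rw [← hexp]
  ring

lemma trZeroAt_of_tendsto_avMeasure (hΩ : IsOpen Ω) (hV : IsOpen V) (hxV : x ∈ V)
    (hx : x ∈ frontier Ω) (hc0 : 0 < c) (hc : c ≤ 1) (hβ : 1 ≤ β)
    (hu : AEStronglyMeasurable u (volume.restrict Ω)) (hq : 1 ≤ q) (hdq : d ≤ n + q * s)
    (h : Tendsto (fun r => avMeasure Ω (V ∩ Ω) d c β q s u (ball x r) /
      ENNReal.ofReal (r ^ (d - q * s))) (𝓝[>] 0) (𝓝 0)) : TrZeroAt Ω u x := by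
  refine trZeroAt_of_tendsto_setLIntegral_wAvg hΩ hx hc0 hc hβ hu ?_
  have hq0 : 0 < q := one_pos.trans_le hq
  have hbound : Tendsto (fun r => volume (ball x 1) ^ (q - 1) *
      (avMeasure Ω (V ∩ Ω) d c β q s u (ball x r) / ENNReal.ofReal (r ^ (d - q * s))))
      (𝓝[>] 0) (𝓝 0) := by
    simpa only [mul_zero] using ENNReal.Tendsto.const_mul h
      (.inr (ENNReal.rpow_ne_top_of_nonneg (by linarith) measure_ball_lt_top.ne))
  have hroot := hbound.ennrpow_const q⁻¹
  rw [ENNReal.zero_rpow_of_pos (inv_pos.2 hq0)] at hroot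
  refine tendsto_of_tendsto_of_tendsto_of_le_of_le' tendsto_const_nhds hroot
    (Eventually.of_forall fun _ => zero_le) ?_
  obtain ⟨ε, hε, hεV⟩ := Metric.isOpen_iff.1 hV x hxV
  filter_upwards [Ioo_mem_nhdsGT hε] with r hr
  exact (ENNReal.le_rpow_inv_iff hq0).2 (setLIntegral_wAvg_div_rpow_le_avMeasure hΩ hx hq hdq
    hr.1 ((ball_subset_ball hr.2.le).trans hεV))

lemma trZeroAt_of_avNormOn_lt_top (hΩ : IsOpen Ω) (hV : IsOpen V) (hxV : x ∈ V)
    (hx : x ∈ frontier Ω) (hc0 : 0 < c) (hc : c ≤ 1) (hβ : 1 ≤ β) (hp : 1 ≤ p) (hp_top : p ≠ ⊤)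
    (hu : AEStronglyMeasurable u (volume.restrict Ω)) (hs : d / p.toReal ≤ s)
    (h : avNormOn Ω (V ∩ Ω) d c β p (s + 1) u < ⊤) : TrZeroAt Ω u x := by
  have hq : 1 ≤ p.toReal := ENNReal.toReal_mono hp_top hp
  have hdq : d ≤ p.toReal * s := (div_le_iff₀' (by linarith)).1 hs
  have := isFiniteMeasure_avMeasure (one_pos.trans_le hp).ne' hp_top h
  have hpoint : avMeasure Ω (V ∩ Ω) d c β p.toReal s u {x} = 0 :=
    measure_mono_null (singleton_subset_iff.2 hx) (avMeasure_frontier hΩ inter_subset_right)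
  refine trZeroAt_of_tendsto_avMeasure hΩ hV hxV hx hc0 hc hβ hu hq
    (hdq.trans (le_add_of_nonneg_left n.cast_nonneg))
    (tendsto_div_ofReal_rpow_of_le (sub_nonpos.2 hdq) ?_)
  simpa only [Real.rpow_zero, ENNReal.ofReal_one, div_one] using
    tendsto_measure_ball_of_measure_singleton_eq_zero hpoint

lemma ae_trZeroAt_of_avNormOn_lt_top (hΩ : IsOpen Ω) (hV : IsOpen V)
    (hreg : AhlforsRegular d A (frontier Ω)) (hnt : (frontier Ω).Nontrivial) (hdn : d ≤ n)
    (hc0 : 0 < c) (hc : c ≤ 1) (hβ : 1 ≤ β) (hp : 1 ≤ p) (hp_top : p ≠ ⊤)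
    (hu : AEStronglyMeasurable u (volume.restrict Ω)) (hs : 0 ≤ s)
    (h : avNormOn Ω (V ∩ Ω) d c β p (s + 1) u < ⊤) :
    ∀ᵐ x ∂(hm n d).restrict (V ∩ frontier Ω), TrZeroAt Ω u x := by
  have hq : 1 ≤ p.toReal := ENNReal.toReal_mono hp_top hp
  have hqs : 0 ≤ p.toReal * s := by positivity
  have := isFiniteMeasure_avMeasure (one_pos.trans_le hp).ne' hp_top h
  obtain ⟨ρ, hρ, hσ⟩ := hreg.exists_pos_forall_le hnt
  have hdens := ae_tendsto_measure_ball_div_rpow_of_measure_eq_zero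
    (m := avMeasure Ω (V ∩ Ω) d c β p.toReal s u) isClosed_frontier
    (avMeasure_frontier hΩ inter_subset_right) hρ fun x hx r hr hrρ => (hσ x hx r hr hrρ).2
  filter_upwards [ae_restrict_of_ae_restrict_of_subset inter_subset_right hdens,
    ae_restrict_mem (hV.measurableSet.inter isClosed_frontier.measurableSet)] with x hx hxV
  exact trZeroAt_of_tendsto_avMeasure hΩ hV hxV.1 hxV.2 hc0 hc hβ hu hq (by linarith)
    (tendsto_div_ofReal_rpow_of_le (by linarith) hx)

end Trace

lemma integrableOn_of_avNormOn_lt_top {F : Type*} [NormedAddCommGroup F] {Ω V K : Set (Euc n)}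
    {d A c s : ℝ} {β p : ℝ≥0∞} {u : Euc n → F} (hΩ : IsOpen Ω) (hV : IsOpen V)
    (hreg : AhlforsRegular d A (frontier Ω)) (hnt : (frontier Ω).Nontrivial) (hd : 0 ≤ d)
    (hc0 : 0 < c) (hc : c ≤ 1) (hβ : 1 ≤ β) (hp : 1 ≤ p)
    (hu : AEStronglyMeasurable u (volume.restrict Ω)) (hs : -(n - d) < s)
    (h : avNormOn Ω (V ∩ Ω) d c β p (s + 1) u < ⊤) (hKV : K ⊆ V) (hK : IsCompact K) :
    IntegrableOn u (K ∩ Ω) := by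
  obtain ⟨ε, hε, hεV⟩ := hK.exists_thickening_subset_open hV hKV
  refine integrableOn_of_setLIntegral_wAvg_lt_top hΩ hnt.nonempty hc0 hc hβ hu hK hε ?_
  have hb : Bornology.IsBounded (thickening ε K ∩ Ω) :=
    hK.isBounded.thickening.subset inter_subset_left
  have hsub : thickening ε K ∩ Ω ⊆ (thickening ε K ∩ Ω) \ frontier Ω :=
    subset_sdiff.2 ⟨Subset.rfl,
      ((disjoint_frontier_iff_isOpen.2 hΩ).mono_right inter_subset_right).symm⟩
  exact setLIntegral_wAvg_lt_top_of_avNormOn hΩ hnt.nonempty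
    (isOpen_thickening.measurableSet.inter hΩ.measurableSet) inter_subset_right hb hp hs.le
    ((lintegral_mono_set hsub).trans_lt
      (hreg.setLIntegral_infDist_rpow_lt_top hnt isClosed_frontier hd hs hb))
    ((avNormOn_mono (inter_subset_inter_left _ hεV)).trans_lt h)

theorem statement_14_general {Ω V : Set (Euc n)} {d A c s : ℝ} {β p : ℝ≥0∞} {u : Euc n → ℝ}
    (hd : 0 ≤ d) (hdn : d ≤ n) (hc0 : 0 < c) (hc : c ≤ 1) (hβ : 1 ≤ β) (hp : 1 ≤ p)
    (hΩ : IsOpen Ω) (hreg : AhlforsRegular d A (frontier Ω)) (hnt : (frontier Ω).Nontrivial)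
    (hV : IsOpen V) (hu : AEStronglyMeasurable u (volume.restrict Ω))
    (h : avNormOn Ω (V ∩ Ω) d c β p (s + 1) u < ⊤) :
    (-(n - d) < s → ∀ K ⊆ V, IsCompact K → IntegrableOn u (K ∩ Ω)) ∧
    (p = ⊤ ∧ 0 < s ∨ p ≠ ⊤ ∧ d / p.toReal ≤ s → ∀ x ∈ V ∩ frontier Ω, TrZeroAt Ω u x) ∧
    (p ≠ ⊤ → 0 ≤ s → ∀ᵐ x ∂(hm n d).restrict (V ∩ frontier Ω), TrZeroAt Ω u x) := by
  refine ⟨fun hs K hKV hK => ?_, ?_, fun hp_top hs => ?_⟩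
  · exact integrableOn_of_avNormOn_lt_top hΩ hV hreg hnt hd hc0 hc hβ hp hu hs h hKV hK
  · rintro (⟨rfl, hs⟩ | ⟨hp_top, hs⟩) x ⟨hxV, hx⟩
    · exact trZeroAt_of_avNormOn_top_lt_top hΩ hV hxV hx hc0 hc hβ hu hs h
    · exact trZeroAt_of_avNormOn_lt_top hΩ hV hxV hx hc0 hc hβ hp hp_top hu hs h
  · exact ae_trZeroAt_of_avNormOn_lt_top hΩ hV hreg hnt hdn hc0 hc hβ hp hp_top hu hs h

/-- Lemma: a sufficient condition for trace zero. -/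
theorem statement_14 (n : ℕ) (d A₀ c s : ℝ) (β p : ℝ≥0∞)
    (hd0 : 0 < d) (hdn : d < n) (hc : 0 < c) (hc1 : c < 1) (hβ : 1 ≤ β) (hp : 1 ≤ p)
    (Ω : Set (Euc n)) (hΩ : IsOpen Ω) (hahl : AhlforsRegular d A₀ (frontier Ω))
    (ξ : Euc n) (hξ : ξ ∈ frontier Ω) (R : ℝ) (hR : 0 < R)
    (hRd : ENNReal.ofReal R < 2 * EMetric.diam (frontier Ω))
    (u : Euc n → ℝ) (hu : MemLLoc Ω β u)
    (hfin : avNormOn Ω (Metric.ball ξ R ∩ Ω) d c β p (s + 1) u < ⊤) :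
    (-(((n : ℝ) - d)) < s →
      ∀ K : Set (Euc n), K ⊆ Metric.ball ξ R → IsCompact K →
        IntegrableOn u (K ∩ Ω) volume) ∧
    ((p = ⊤ ∧ 0 < s) ∨ (p ≠ ⊤ ∧ d / p.toReal ≤ s) →
      ∀ x ∈ Metric.ball ξ R ∩ frontier Ω, TrZeroAt Ω u x) ∧
    (p ≠ ⊤ → 0 ≤ s →
      ∀ᵐ x ∂(hm n d).restrict (Metric.ball ξ R ∩ frontier Ω), TrZeroAt Ω u x) := by
  have hnt : (frontier Ω).Nontrivial := not_subsingleton_iff.1 fun hss =>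
    not_lt_zero (hRd.trans_eq (mul_eq_zero_of_right 2 (ediam_subsingleton hss)))
  exact statement_14_general hd0.le hdn.le hc hc1.le hβ hp hΩ hahl hnt isOpen_ball hu.1 hfin

end Paper
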